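/- There is a dense G_δ subset of C_λ (in the uniform topology) such that every map f in this subset has normal level sets: there is a countable set E_f ⊂ (min f, max f) such that the level set Lev_f(c) = {x ∈ I : f(x) = c} is (i) a non-empty perfect set when c ∉ E_f ∪ {min f, max f}, (ii) a single point when c = min f or c = max f, and (iii) the union of a nonempty perfect set P with an isolated point x ∉ P when c ∈ E_f. -/

import Mathlib

open MeasureTheory Set
open scoped ENNReal

noncomputable section

/-- `C_λ`: continuous maps of `[0,1]` preserving Lebesgue measure, with the uniform metric. -/
abbrev CLam : Type := {f : C(unitInterval, unitInterval) // MeasurePreserving f volume volume}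

/-- The level set `Lev_f(c) = {x ∈ I : f(x) = c}`. -/
def Lev (f : C(unitInterval, unitInterval)) (c : ℝ) : Set unitInterval :=
  {x : unitInterval | (f x : ℝ) = c}

/-- `min f`. -/
def minVal (f : C(unitInterval, unitInterval)) : ℝ :=
  sInf (Set.range fun x : unitInterval => (f x : ℝ))

/-- `max f`. -/
def maxVal (f : C(unitInterval, unitInterval)) : ℝ :=
  sSup (Set.range fun x : unitInterval => (f x : ℝ))

/-- `f` has normal level sets: there is a countable `E_f ⊂ (min f, max f)` such that
`Lev_f(c)` is a non-empty perfect set for `c ∈ (min f, max f) \ E_f`, a single point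
for `c ∈ {min f, max f}`, and the union of a nonempty perfect set `P` with an isolated
point `x ∉ P` for `c ∈ E_f`. -/
def HasNormalLevelSets (f : C(unitInterval, unitInterval)) : Prop :=
  ∃ E : Set ℝ, E.Countable ∧ E ⊆ Set.Ioo (minVal f) (maxVal f) ∧
    (∀ c ∈ Set.Ioo (minVal f) (maxVal f), c ∉ E →
      Perfect (Lev f c) ∧ (Lev f c).Nonempty) ∧
    (∀ c : ℝ, c = minVal f ∨ c = maxVal f → ∃ x : unitInterval, Lev f c = {x}) ∧
    (∀ c ∈ E, ∃ (P : Set unitInterval) (x : unitInterval),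
      Perfect P ∧ P.Nonempty ∧ x ∉ P ∧ Lev f c = P ∪ {x} ∧
      ∃ U : Set unitInterval, IsOpen U ∧ U ∩ Lev f c = {x})

/-!
Suppose a continuous `f : I → ℝ` has no point of increase or decrease relative to any neighbourhood
of the point, and takes distinct values at distinct local extrema. Then a point is isolated in its
level set if and only if it is a local extremum: if `f y ≠ f x` for all `y ≠ x` near `x`, the sign
of `f - f x` is constant on each side of `x`, and opposite signs would make `x` a point of increase
or of decrease. Hence each level set without its at most one local extremum is perfect, only
countably many levels contain a local extremum, and the global extrema are attained exactly once.

Both properties follow from countably many open dense conditions on `C(I, ℝ)`, each depending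
only on the order of the values of `f`. Such a condition is also dense in `C_λ`: approximate `f` by
some `g` in the open dense set whose level sets are null. Composing `g` with the distribution
function of its law gives a Lebesgue-preserving map that orders points as `g` does and is at most
twice as far from `f` as `g` is.
-/

open Filter TopologicalSpace
open scoped Topology unitInterval

theorem isOpen_setOf_forall_of_compactSpace {X K : Type*} [TopologicalSpace X]
    [TopologicalSpace K] [CompactSpace K] {W : X → K → Prop}
    (hW : IsOpen {p : X × K | W p.1 p.2}) : IsOpen {x | ∀ k, W x k} := by
  rw [isOpen_iff_eventually]
  intro x hx
  simpa using isCompact_univ.eventually_forall_of_forall_eventually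
    fun k _ ↦ hW.mem_nhds (hx k)

theorem dense_of_countable_setOf_add_smul_notMem {E : Type*} [AddCommGroup E] [Module ℝ E]
    [TopologicalSpace E] [ContinuousAdd E] [ContinuousSMul ℝ E] {U : Set E} (u : E)
    (h : ∀ f, {t : ℝ | f + t • u ∉ U}.Countable) : Dense U := by
  intro f
  have tilt_continuous : Continuous fun t : ℝ ↦ f + t • u := by fun_prop
  have good_dense : Dense {t : ℝ | f + t • u ∈ U} := by
    simpa [compl_ofPred] using (h f).dense_compl ℝ
  simpa using tilt_continuous.closure_preimage_subset U (good_dense 0)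

theorem countable_image_setOf_isLocalMax {X β : Type*} [TopologicalSpace X]
    [SecondCountableTopology X] [PartialOrder β] (f : X → β) :
    (f '' {x | IsLocalMax f x}).Countable := by
  refine ((countable_countableBasis X).biUnion fun B _ ↦
    Subsingleton.countable (s := {c | IsGreatest (f '' B) c}) fun _ h _ h' ↦ h.unique h').mono ?_
  rintro _ ⟨x, hx, rfl⟩
  obtain ⟨B, hB, hxB, hBf⟩ := (isBasis_countableBasis X).mem_nhds_iff.1 hx
  exact mem_biUnion hB ⟨mem_image_of_mem f hxB, forall_mem_image.2 hBf⟩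

theorem countable_image_setOf_isLocalExtr {X β : Type*} [TopologicalSpace X]
    [SecondCountableTopology X] [PartialOrder β] (f : X → β) :
    (f '' {x | IsLocalExtr f x}).Countable := by
  have hmin : (f '' {x | IsLocalMin f x}).Countable :=
    countable_image_setOf_isLocalMax (OrderDual.toDual ∘ f)
  refine (hmin.union (countable_image_setOf_isLocalMax f)).mono ?_
  rw [← image_union]
  exact image_mono fun _ hx ↦ hx

theorem exists_rat_mem_Icc_subset {x : ℝ} {V : Set ℝ} (hV : V ∈ 𝓝 x) :
    ∃ p q : ℚ, x ∈ Icc (p : ℝ) q ∧ Icc (p : ℝ) q ⊆ V := by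
  obtain ⟨l, r, ⟨hl, hr⟩, hlr⟩ := mem_nhds_iff_exists_Ioo_subset.1 hV
  obtain ⟨p, hlp, hpx⟩ := exists_rat_btwn hl
  obtain ⟨q, hxq, hqr⟩ := exists_rat_btwn hr
  exact ⟨p, q, ⟨hpx.le, hxq.le⟩, (Icc_subset_Ioo hlp hqr).trans hlr⟩

/-- `x` is a point of increase of `f` relative to `s`: on `s`, the values of `f` to the left of
`x` are at most `f x` and those to the right at least `f x`. Points of decrease of a real function
`f` are handled as points of increase of `-f`. -/
def IsIncreasePointOn {X β : Type*} [LT X] [LE β] (f : X → β) (s : Set X) (x : X) : Prop :=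
  ∀ y ∈ s, (y < x → f y ≤ f x) ∧ (x < y → f x ≤ f y)

namespace IsIncreasePointOn

variable {X β : Type*}

theorem mono [LT X] [LE β] {f : X → β} {s t : Set X} {x : X} (h : IsIncreasePointOn f t x)
    (hst : s ⊆ t) : IsIncreasePointOn f s x :=
  fun y hy ↦ h y (hst hy)

theorem le_of_le [PartialOrder X] [Preorder β] {f : X → β} {s : Set X} {x y : X}
    (h : IsIncreasePointOn f s x) (hy : y ∈ s) (hyx : y ≤ x) : f y ≤ f x :=
  hyx.eq_or_lt.elim (fun e ↦ (congrArg f e).le) (h y hy).1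

theorem le_of_ge [PartialOrder X] [Preorder β] {f : X → β} {s : Set X} {x y : X}
    (h : IsIncreasePointOn f s x) (hy : y ∈ s) (hxy : x ≤ y) : f x ≤ f y :=
  hxy.eq_or_lt.elim (fun e ↦ (congrArg f e).le) (h y hy).2

end IsIncreasePointOn

theorem not_isIncreasePointOn_of_zigzag {X β : Type*} [LinearOrder X] [Preorder β] {f : X → β}
    {s : Set X} {x a b c d : X} (hab : a ≤ b) (hbc : b ≤ c) (hcd : c ≤ d) (hx : x ∈ Icc a d)
    (hs : Icc a d ⊆ s) (hac : f c < f a) (hbd : f d < f b) : ¬IsIncreasePointOn f s x := by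
  intro h
  rcases le_total x c with hxc | hcx
  · exact hac.not_ge ((h.le_of_le (hs ⟨le_rfl, hab.trans (hbc.trans hcd)⟩) hx.1).trans
      (h.le_of_ge (hs ⟨hab.trans hbc, hcd⟩) hxc))
  · exact hbd.not_ge ((h.le_of_le (hs ⟨hab, hbc.trans hcd⟩) (hbc.trans hcx)).trans
      (h.le_of_ge (hs ⟨hab.trans (hbc.trans hcd), le_rfl⟩) hx.2))

theorem isOpen_setOf_forall_not_isIncreasePointOn_ball {X β : Type*} [PseudoMetricSpace X]
    [LinearOrder X] [OrderClosedTopology X] [CompactSpace X] [TopologicalSpace β] [LinearOrder β]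
    [OrderClosedTopology β] (δ : ℝ) :
    IsOpen {f : C(X, β) | ∀ x, ¬IsIncreasePointOn f (Metric.ball x δ) x} := by
  refine isOpen_setOf_forall_of_compactSpace
    (W := fun (f : C(X, β)) x ↦ ¬IsIncreasePointOn f (Metric.ball x δ) x) ?_
  have witness (p : C(X, β) × X) : ¬IsIncreasePointOn p.1 (Metric.ball p.2 δ) p.2 ↔
      ∃ y, dist y p.2 < δ ∧ (y < p.2 ∧ p.1 p.2 < p.1 y ∨ p.2 < y ∧ p.1 y < p.1 p.2) := by
    simp only [IsIncreasePointOn, Metric.mem_ball]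
    grind
  simp only [witness, ofPred_exists, ofPred_and, ofPred_or]
  refine isOpen_iUnion fun y ↦ (isOpen_lt (by fun_prop) (by fun_prop)).inter (.union ?_ ?_)
  · exact (isOpen_lt (by fun_prop) (by fun_prop)).inter (isOpen_lt (by fun_prop) (by fun_prop))
  · exact (isOpen_lt (by fun_prop) (by fun_prop)).inter (isOpen_lt (by fun_prop) (by fun_prop))

/-! ### Functions without points of increase are dense -/

/-- The oscillation `a * sin (2πMx)` on `[0, 1]`, a small perturbation that destroys all points of
increase. -/
def sineWave (a : ℝ) (M : ℕ) : C(I, ℝ) :=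
  ⟨fun x ↦ a * Real.sin (2 * Real.pi * (M * x)), by fun_prop⟩

theorem norm_sineWave_le {a : ℝ} (ha : 0 ≤ a) (M : ℕ) : ‖sineWave a M‖ ≤ a := by
  refine (ContinuousMap.norm_le _ ha).2 fun x ↦ ?_
  simpa [sineWave, abs_of_nonneg ha] using
    mul_le_of_le_one_right ha (Real.abs_sin_le_one (2 * Real.pi * (M * x)))

theorem sineWave_eq_of_mul_eq {a u : ℝ} {M k : ℕ} {x : I} (hx : M * (x : ℝ) = k + u) :
    sineWave a M x = a * Real.sin (2 * Real.pi * u) := by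
  have : 2 * Real.pi * (M * (x : ℝ)) = 2 * Real.pi * u + k * (2 * Real.pi) := by rw [hx]; ring
  simp only [sineWave, ContinuousMap.coe_mk, this, Real.sin_add_nat_mul_two_pi]

theorem exists_nat_mul_mem_Icc {M : ℕ} (hM : 0 < M) (x : I) :
    ∃ k : ℕ, k + 1 ≤ M ∧ M * (x : ℝ) ∈ Icc (k : ℝ) (k + 1) := by
  have hM' : (0 : ℝ) < M := mod_cast hM
  have hx : M * (x : ℝ) ≤ M := mul_le_of_le_one_right hM'.le x.2.2
  rcases hx.eq_or_lt with h | h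
  · exact ⟨M - 1, by lia, by rw [h, Nat.cast_sub hM]; constructor <;> simp⟩
  · have h0 : 0 ≤ M * (x : ℝ) := mul_nonneg hM'.le x.2.1
    exact ⟨⌊M * (x : ℝ)⌋₊, (Nat.floor_lt h0).2 h, Nat.floor_le h0, (Nat.lt_floor_add_one _).le⟩

theorem exists_sineWave_zigzag {M : ℕ} (hM : 0 < M) (a : ℝ) (x : I) :
    ∃ e₀ t₁ t₂ e₁ : I, e₀ ≤ t₁ ∧ t₁ ≤ t₂ ∧ t₂ ≤ e₁ ∧ x ∈ Icc e₀ e₁ ∧ M * ((e₁ : ℝ) - e₀) = 1 ∧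
      sineWave a M e₀ = 0 ∧ sineWave a M t₁ = a ∧ sineWave a M t₂ = -a ∧
      sineWave a M e₁ = 0 := by
  have hM' : (0 : ℝ) < M := mod_cast hM
  obtain ⟨k, hkM, hk⟩ := exists_nat_mul_mem_Icc hM x
  have hkM' : (k : ℝ) + 1 ≤ M := mod_cast hkM
  have cell_point (u : ℝ) (hu : u ∈ Icc (0 : ℝ) 1) : ∃ y : I, M * (y : ℝ) = k + u :=
    ⟨⟨(k + u) / M, div_nonneg (add_nonneg k.cast_nonneg hu.1) hM'.le,
      (div_le_one hM').2 (by linarith [hu.2])⟩, mul_div_cancel₀ _ hM'.ne'⟩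
  have le_of_mul_le {y z : I} (h : M * (y : ℝ) ≤ M * z) : y ≤ z :=
    Subtype.coe_le_coe.1 (le_of_mul_le_mul_left h hM')
  obtain ⟨e₀, he₀⟩ := cell_point 0 (by norm_num)
  obtain ⟨t₁, ht₁⟩ := cell_point (1 / 4) (by norm_num)
  obtain ⟨t₂, ht₂⟩ := cell_point (3 / 4) (by norm_num)
  obtain ⟨e₁, he₁⟩ := cell_point 1 (by norm_num)
  refine ⟨e₀, t₁, t₂, e₁, le_of_mul_le (by linarith), le_of_mul_le (by linarith),
    le_of_mul_le (by linarith),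
    ⟨le_of_mul_le (by linarith [hk.1]), le_of_mul_le (by linarith [hk.2])⟩, ?_, ?_, ?_, ?_, ?_⟩
  · linear_combination he₁ - he₀
  · simp [sineWave_eq_of_mul_eq he₀]
  · rw [sineWave_eq_of_mul_eq ht₁, show 2 * Real.pi * (1 / 4) = Real.pi / 2 by ring]
    simp
  · rw [sineWave_eq_of_mul_eq ht₂, show 2 * Real.pi * (3 / 4) = Real.pi / 2 + Real.pi by ring]
    simp
  · simp [sineWave_eq_of_mul_eq he₁]

-- Across one period the wave runs `0, a, -a, 0` while `f` varies by less than `a`, so the sum makes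
-- two overlapping descents, one of which straddles any given point of the period.
theorem not_isIncreasePointOn_add_sineWave {f : C(I, ℝ)} {a r : ℝ} {M : ℕ} (hM : 0 < M)
    (hMr : 1 < M * r) (hf : ∀ x y : I, dist x y < r → dist (f x) (f y) < a) (x : I) :
    ¬IsIncreasePointOn (f + sineWave a M) (Metric.ball x r) x := by
  obtain ⟨e₀, t₁, t₂, e₁, h₀₁, h₁₂, h₂₁, hx, hcell, w₀, crest, trough, w₁⟩ :=
    exists_sineWave_zigzag hM a x
  have dist_lt {y z : I} (hy : y ∈ Icc e₀ e₁) (hz : z ∈ Icc e₀ e₁) : dist y z < r :=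
    (Real.dist_le_of_mem_Icc hy hz).trans_lt
      (lt_of_mul_lt_mul_left (hcell.trans_lt hMr) M.cast_nonneg)
  have f_sub_lt {y z : I} (hy : y ∈ Icc e₀ e₁) (hz : z ∈ Icc e₀ e₁) : f y - f z < a :=
    (le_abs_self _).trans_lt (hf y z (dist_lt hy hz))
  refine not_isIncreasePointOn_of_zigzag h₀₁ h₁₂ h₂₁ hx (fun y hy ↦ dist_lt hy hx) ?_ ?_
  · simp only [ContinuousMap.add_apply, trough, w₀]
    linarith [f_sub_lt ⟨h₀₁.trans h₁₂, h₂₁⟩ ⟨le_rfl, hx.1.trans hx.2⟩]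
  · simp only [ContinuousMap.add_apply, crest, w₁]
    linarith [f_sub_lt ⟨hx.1.trans hx.2, le_rfl⟩ ⟨h₀₁, h₁₂.trans h₂₁⟩]

theorem dense_setOf_forall_not_isIncreasePointOn_ball {δ : ℝ} (hδ : 0 < δ) :
    Dense {f : C(I, ℝ) | ∀ x, ¬IsIncreasePointOn f (Metric.ball x δ) x} := by
  refine Metric.dense_iff.2 fun f ε hε ↦ ?_
  obtain ⟨r, hr, hf⟩ := Metric.uniformContinuous_iff.1
    (CompactSpace.uniformContinuous_of_continuous f.continuous) (ε / 2) (half_pos hε)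
  obtain ⟨M, hM⟩ := exists_nat_gt (1 / min r δ)
  have hrδ : 0 < min r δ := lt_min hr hδ
  have hM0 : 0 < M := Nat.cast_pos.1 ((one_div_pos.2 hrδ).trans hM)
  refine ⟨f + sineWave (ε / 2) M, ?_, fun x hx ↦ ?_⟩
  · rw [Metric.mem_ball, dist_eq_norm, add_sub_cancel_left]
    exact (norm_sineWave_le (half_pos hε).le M).trans_lt (half_lt_self hε)
  · exact not_isIncreasePointOn_add_sineWave hM0 ((div_lt_iff₀ hrδ).1 hM)
      (fun x y h ↦ hf (h.trans_le (min_le_left r δ))) x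
      (hx.mono (Metric.ball_subset_ball (min_le_right r δ)))

/-! ### Separating extreme values and flattening levels by tilting -/

/-- No extreme value of `f` over `s` is also an extreme value of `f` over `t`. Imposed on all
disjoint pairs of intervals with rational endpoints, this separates the values of `f` at distinct
local extrema. -/
def HasDistinctExtrema {X β : Type*} [Preorder β] (f : X → β) (s t : Set X) : Prop :=
  ∀ x ∈ s, ∀ y ∈ t, IsExtrOn f s x → IsExtrOn f t y → f x ≠ f y

theorem isClosed_setOf_isExtrOn {X β : Type*} [TopologicalSpace X] [TopologicalSpace β]
    [LocallyCompactPair X β] [Preorder β] [OrderClosedTopology β] (s : Set X) :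
    IsClosed {p : C(X, β) × X | IsExtrOn p.1 s p.2} := by
  have min_closed : IsClosed {p : C(X, β) × X | IsMinOn p.1 s p.2} := by
    simp only [isMinOn_iff, ofPred_forall]
    exact isClosed_biInter fun y _ ↦ isClosed_le (by fun_prop) (by fun_prop)
  have max_closed : IsClosed {p : C(X, β) × X | IsMaxOn p.1 s p.2} := by
    simp only [isMaxOn_iff, ofPred_forall]
    exact isClosed_biInter fun y _ ↦ isClosed_le (by fun_prop) (by fun_prop)
  exact min_closed.union max_closed

theorem isOpen_setOf_hasDistinctExtrema {X β : Type*} [TopologicalSpace X] [CompactSpace X]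
    [TopologicalSpace β] [PartialOrder β] [OrderClosedTopology β] {s t : Set X} (hs : IsClosed s)
    (ht : IsClosed t) : IsOpen {f : C(X, β) | HasDistinctExtrema f s t} := by
  have collision_closed : IsClosed {p : C(X, β) × X × X | (p.2.1 ∈ s ∧ p.2.2 ∈ t) ∧
      (IsExtrOn p.1 s p.2.1 ∧ IsExtrOn p.1 t p.2.2) ∧ p.1 p.2.1 = p.1 p.2.2} :=
    ((hs.preimage (by fun_prop)).inter (ht.preimage (by fun_prop))).inter <|
      (((isClosed_setOf_isExtrOn s).preimage
          (f := fun p : C(X, β) × X × X ↦ (p.1, p.2.1)) (by fun_prop)).inter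
        ((isClosed_setOf_isExtrOn t).preimage
          (f := fun p : C(X, β) × X × X ↦ (p.1, p.2.2)) (by fun_prop))).inter <|
      isClosed_eq (by fun_prop) (by fun_prop)
  convert isOpen_setOf_forall_of_compactSpace
    (W := fun f xy ↦ (f, xy) ∉ {p : C(X, β) × X × X | (p.2.1 ∈ s ∧ p.2.2 ∈ t) ∧
      (IsExtrOn p.1 s p.2.1 ∧ IsExtrOn p.1 t p.2.2) ∧ p.1 p.2.1 = p.1 p.2.2})
    collision_closed.isOpen_compl using 1
  ext f
  simp only [HasDistinctExtrema, mem_ofPred_eq, Prod.forall]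
  grind

section Tilt

variable {X : Type*} {f u : X → ℝ} {s : Set X} {p q τ τ' a a' : ℝ}

theorem sub_mem_Icc_of_tilt {P : Set ℝ → ℝ → Prop} (hP : P ∈ ({IsLeast, IsGreatest} : Set _))
    (hu : MapsTo u s (Icc p q)) (hτ : τ ≤ τ') (ha : P ((f + τ • u) '' s) a)
    (ha' : P ((f + τ' • u) '' s) a') : a' - a ∈ Icc ((τ' - τ) * p) ((τ' - τ) * q) := by
  have tilt_bounds {x : X} (hx : x ∈ s) :
      (f + τ' • u) x - (f + τ • u) x ∈ Icc ((τ' - τ) * p) ((τ' - τ) * q) := by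
    have : (f + τ' • u) x - (f + τ • u) x = (τ' - τ) * u x := by
      simp only [Pi.add_apply, Pi.smul_apply, smul_eq_mul]
      ring
    exact this ▸ ⟨mul_le_mul_of_nonneg_left (hu hx).1 (sub_nonneg.2 hτ),
      mul_le_mul_of_nonneg_left (hu hx).2 (sub_nonneg.2 hτ)⟩
  rcases hP with rfl | rfl
  all_goals
    obtain ⟨⟨x, hx, rfl⟩, hext⟩ := ha
    obtain ⟨⟨x', hx', rfl⟩, hext'⟩ := ha'
    have := hext (mem_image_of_mem _ hx')
    have := hext' (mem_image_of_mem _ hx)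
    constructor <;> linarith [(tilt_bounds hx).1, (tilt_bounds hx).2, (tilt_bounds hx').1,
      (tilt_bounds hx').2]

-- Tilting by `τ` moves the values in `A` at rate at most `q` and those in `B` at rate at least
-- `r > q`, so the two can meet at only one `τ`.
theorem subsingleton_setOf_inter_nonempty {A B : ℝ → Set ℝ} {q r : ℝ} (hqr : q < r)
    (hA : ∀ ⦃τ τ' a a'⦄, τ ≤ τ' → a ∈ A τ → a' ∈ A τ' → a' - a ≤ (τ' - τ) * q)
    (hB : ∀ ⦃τ τ' b b'⦄, τ ≤ τ' → b ∈ B τ → b' ∈ B τ' → (τ' - τ) * r ≤ b' - b) :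
    {τ | (A τ ∩ B τ).Nonempty}.Subsingleton := by
  suffices ∀ ⦃τ τ'⦄, (A τ ∩ B τ).Nonempty → (A τ' ∩ B τ').Nonempty → τ ≤ τ' → τ' ≤ τ from
    fun τ hτ τ' hτ' ↦ (le_total τ τ').elim (fun h ↦ h.antisymm (this hτ hτ' h))
      fun h ↦ (this hτ' hτ h).antisymm h
  rintro τ τ' ⟨a, haA, haB⟩ ⟨a', haA', haB'⟩ hττ'
  by_contra! hlt
  exact (mul_lt_mul_of_pos_left hqr (sub_pos.2 hlt)).not_ge
    ((hB hττ' haB haB').trans (hA hττ' haA haA'))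

end Tilt

theorem exists_common_extreme_value {X β : Type*} [Preorder β] {f : X → β} {s t : Set X}
    (h : ¬HasDistinctExtrema f s t) :
    ∃ P ∈ ({IsLeast, IsGreatest} : Set (Set β → β → Prop)),
      ∃ Q ∈ ({IsLeast, IsGreatest} : Set (Set β → β → Prop)), ∃ v, P (f '' s) v ∧ Q (f '' t) v := by
  have extreme_value {s : Set X} {z : X} (hz : z ∈ s) (h : IsExtrOn f s z) :
      ∃ P ∈ ({IsLeast, IsGreatest} : Set (Set β → β → Prop)), P (f '' s) (f z) :=
    h.elim (fun h ↦ ⟨_, .inl rfl, mem_image_of_mem _ hz, forall_mem_image.2 h⟩)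
      fun h ↦ ⟨_, .inr rfl, mem_image_of_mem _ hz, forall_mem_image.2 h⟩
  simp only [HasDistinctExtrema, not_forall, not_not] at h
  obtain ⟨x, hx, y, hy, hxs, hyt, hxy⟩ := h
  obtain ⟨P, hP, hPx⟩ := extreme_value hx hxs
  obtain ⟨Q, hQ, hQy⟩ := extreme_value hy hyt
  exact ⟨P, hP, Q, hQ, f x, hPx, hxy ▸ hQy⟩

theorem countable_setOf_not_hasDistinctExtrema_tilt {X : Type*} {u : X → ℝ} {s t : Set X}
    {p q r w : ℝ} (f : X → ℝ) (hqr : q < r) (hs : MapsTo u s (Icc p q))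
    (ht : MapsTo u t (Icc r w)) :
    {τ : ℝ | ¬HasDistinctExtrema (f + τ • u) s t}.Countable := by
  have kinds_countable : ({IsLeast, IsGreatest} : Set (Set ℝ → ℝ → Prop)).Countable :=
    (toFinite _).countable
  refine (kinds_countable.biUnion fun P hP ↦ kinds_countable.biUnion fun Q hQ ↦
    (subsingleton_setOf_inter_nonempty hqr (A := fun τ ↦ {a | P ((f + τ • u) '' s) a})
      (B := fun τ ↦ {b | Q ((f + τ • u) '' t) b}) ?_ ?_).countable).mono fun τ hτ ↦ ?_
  · exact fun τ τ' a a' hτ ha ha' ↦ (sub_mem_Icc_of_tilt hP hs hτ ha ha').2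
  · exact fun τ τ' b b' hτ hb hb' ↦ (sub_mem_Icc_of_tilt hQ ht hτ hb hb').1
  · obtain ⟨P, hP, Q, hQ, v, hv⟩ := exists_common_extreme_value hτ
    exact mem_biUnion hP (mem_biUnion hQ ⟨v, hv⟩)

/-- The inclusion of `[0, 1]` in `ℝ`, the direction in which functions are tilted. -/
def inclusionMap : C(I, ℝ) :=
  ⟨Subtype.val, continuous_subtype_val⟩

theorem dense_setOf_hasDistinctExtrema {p q r w : ℝ} (hqr : q < r) :
    Dense {f : C(I, ℝ) | HasDistinctExtrema f ((↑) ⁻¹' Icc p q) ((↑) ⁻¹' Icc r w)} :=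
  dense_of_countable_setOf_add_smul_notMem inclusionMap fun f ↦
    countable_setOf_not_hasDistinctExtrema_tilt (u := inclusionMap) f hqr
      (fun _ hx ↦ hx) (fun _ hx ↦ hx)

/-- All level sets of `f` are `μ`-null, so that the distribution function of the law of `f` is
continuous. -/
def HasNullLevelSets {X β : Type*} [MeasurableSpace X] (μ : Measure X) (f : X → β) : Prop :=
  ∀ c, μ (f ⁻¹' {c}) = 0

theorem aedisjoint_preimage_tilt {X : Type*} [MeasurableSpace X] {μ : Measure X}
    [NullSingletonClass μ] {f u : X → ℝ} (hu : u.Injective) {t t' : ℝ} (h : t ≠ t') (c c' : ℝ) :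
    AEDisjoint μ ((f + t • u) ⁻¹' {c}) ((f + t' • u) ⁻¹' {c'}) := by
  refine Subsingleton.measure_zero (fun x hx y hy ↦ hu ?_) μ
  simp only [mem_inter_iff, mem_preimage, Pi.add_apply, Pi.smul_apply, smul_eq_mul,
    mem_singleton_iff] at hx hy
  exact mul_left_cancel₀ (sub_ne_zero.2 h) (by linarith)

-- Level sets of two different tilts share at most one point, and only countably many members of an
-- almost disjoint family have positive measure.
theorem countable_setOf_not_hasNullLevelSets_tilt {X : Type*} [MeasurableSpace X]
    {μ : Measure X} [SFinite μ] [NullSingletonClass μ] {f u : X → ℝ} (hf : Measurable f)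
    (hu : Measurable u) (hu_inj : u.Injective) :
    {t : ℝ | ¬HasNullLevelSets μ (f + t • u)}.Countable := by
  choose c hc using fun t : {t : ℝ | ¬HasNullLevelSets μ (f + t • u)} ↦ not_forall.1 t.2
  have countable_pos := Measure.countable_meas_pos_of_disjoint_iUnion₀ (μ := μ)
    (As := fun t : {t : ℝ | ¬HasNullLevelSets μ (f + t • u)} ↦ (f + t.1 • u) ⁻¹' {c t})
    (fun t ↦ ((hf.add (hu.const_smul t.1)) (measurableSet_singleton (c t))).nullMeasurableSet)
    fun t t' htt' ↦ aedisjoint_preimage_tilt hu_inj (Subtype.coe_injective.ne htt') (c t) (c t')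
  refine countable_coe_iff.1 (countable_univ_iff.1 (countable_pos.mono fun t _ ↦ ?_))
  exact pos_iff_ne_zero.2 (hc t)

theorem dense_setOf_hasNullLevelSets :
    Dense {f : C(I, ℝ) | HasNullLevelSets volume f} :=
  dense_of_countable_setOf_add_smul_notMem inclusionMap fun f ↦
    countable_setOf_not_hasNullLevelSets_tilt (u := inclusionMap) f.measurable
      inclusionMap.measurable Subtype.val_injective

/-! ### Normalising the law of a function -/

section DistributionFunction

open ProbabilityTheory

variable {ν : Measure ℝ} [IsProbabilityMeasure ν]

theorem continuous_cdf [NullSingletonClass ν] : Continuous (cdf ν) := by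
  refine continuous_iff_continuousAt.2 fun x ↦ ?_
  rw [(monotone_cdf ν).continuousAt_iff_leftLim_eq_rightLim, (cdf ν).rightLim_eq]
  have jump_null : ENNReal.ofReal (cdf ν x - Function.leftLim (cdf ν) x) = 0 := by
    rw [← StieltjesFunction.measure_singleton, measure_cdf, measure_singleton]
  exact ((monotone_cdf ν).leftLim_le le_rfl).antisymm
    (sub_nonpos.1 (ENNReal.ofReal_eq_zero.1 jump_null))

theorem exists_cdf_eq [NullSingletonClass ν] {s : ℝ} (hs : s ∈ Ioo (0 : ℝ) 1) :
    ∃ y, cdf ν y = s := by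
  obtain ⟨a, ha⟩ := ((tendsto_cdf_atBot ν).eventually_lt_const hs.1).exists
  obtain ⟨b, hb⟩ := ((tendsto_cdf_atTop ν).eventually_const_lt hs.2).exists
  exact mem_range_of_exists_le_of_exists_ge continuous_cdf ⟨a, ha.le⟩ ⟨b, hb.le⟩

theorem measure_setOf_cdf_le [NullSingletonClass ν] {t : ℝ} (ht : t ∈ Icc (0 : ℝ) 1) :
    ν {x | cdf ν x ≤ t} = ENNReal.ofReal t := by
  rcases ht.2.eq_or_lt with rfl | ht1
  · simp [cdf_le_one]
  have le_of_lt {s : ℝ} (hts : t < s) (hs1 : s < 1) : ν.real {x | cdf ν x ≤ t} ≤ s := by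
    obtain ⟨y, rfl⟩ := exists_cdf_eq (ν := ν) ⟨ht.1.trans_lt hts, hs1⟩
    rw [cdf_eq_real]
    exact measureReal_mono fun x hx ↦ ((monotone_cdf ν).reflect_lt (hx.trans_lt hts)).le
  have ge : t ≤ ν.real {x | cdf ν x ≤ t} := by
    rcases ht.1.eq_or_lt with rfl | ht0
    · exact measureReal_nonneg
    obtain ⟨y, rfl⟩ := exists_cdf_eq (ν := ν) ⟨ht0, ht1⟩
    nth_rw 1 [cdf_eq_real]
    exact measureReal_mono fun x hx ↦ monotone_cdf ν hx
  rw [← ofReal_measureReal]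
  congr 1
  refine ge.antisymm' (le_of_not_gt fun h ↦ ?_)
  obtain ⟨s, hts, hs⟩ := exists_between h
  exact hs.not_ge (le_of_lt hts (hs.trans_le measureReal_le_one))

/-- The distribution function of `ν`, as a map into `[0, 1]` so that it can push an atomless law
forward to Lebesgue measure. -/
def unitCdf (ν : Measure ℝ) (x : ℝ) : I :=
  ⟨cdf ν x, cdf_nonneg ν x, cdf_le_one ν x⟩

theorem measurePreserving_unitCdf [NullSingletonClass ν] :
    MeasurePreserving (unitCdf ν) ν volume := by
  have unitCdf_measurable : Measurable (unitCdf ν) :=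
    (monotone_cdf ν).measurable.subtype_mk
  refine ⟨unitCdf_measurable, Measure.ext_of_Iic _ _ fun t ↦ ?_⟩
  rw [Measure.map_apply unitCdf_measurable measurableSet_Iic, unitInterval.volume_Iic]
  exact measure_setOf_cdf_le t.2

theorem cdf_lt_cdf {x y : ℝ} (h : ν (Ioc x y) ≠ 0) : cdf ν x < cdf ν y := by
  rw [← measure_cdf ν, StieltjesFunction.measure_Ioc] at h
  exact sub_pos.1 (ENNReal.ofReal_pos.1 (pos_iff_ne_zero.2 h))

end DistributionFunction

instance isOpenPosMeasure_volume_unitInterval : (volume : Measure I).IsOpenPosMeasure where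
  open_pos U hU hne := by
    obtain ⟨a, b, hab, hU⟩ := hU.exists_Ioo_subset hne
    refine ((?_ : volume (Ioo a b) ≠ 0).bot_lt.trans_le (measure_mono hU)).ne'
    simpa [unitInterval.volume_Ioo] using hab

theorem nullSingletonClass_map {X β : Type*} [MeasurableSpace X] [MeasurableSpace β]
    [MeasurableSingletonClass β] {μ : Measure X} {g : X → β} (hg : Measurable g)
    (hnull : HasNullLevelSets μ g) : NullSingletonClass (μ.map g) :=
  ⟨fun c ↦ (Measure.map_apply hg (measurableSet_singleton c)).trans (hnull c)⟩

theorem map_Ioc_ne_zero {X : Type*} [TopologicalSpace X] [PreconnectedSpace X] [MeasurableSpace X]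
    [OpensMeasurableSpace X] {μ : Measure X} [μ.IsOpenPosMeasure] (g : C(X, ℝ)) {x y : X}
    (h : g x < g y) : μ.map g (Ioc (g x) (g y)) ≠ 0 := by
  rw [Measure.map_apply g.measurable measurableSet_Ioc]
  obtain ⟨c, hc⟩ := exists_between h
  obtain ⟨z, rfl⟩ := mem_range_of_exists_le_of_exists_ge g.continuous ⟨x, hc.1.le⟩ ⟨y, hc.2.le⟩
  exact (((isOpen_Ioo.preimage g.continuous).measure_pos μ ⟨z, hc⟩).trans_le
    (measure_mono (preimage_mono Ioo_subset_Ioc_self))).ne'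

theorem exists_measurePreserving_orderEquivalent {X : Type*} [TopologicalSpace X]
    [PreconnectedSpace X] [MeasurableSpace X] [OpensMeasurableSpace X] {μ : Measure X}
    [IsProbabilityMeasure μ] [μ.IsOpenPosMeasure] {g : C(X, ℝ)} (hg : HasNullLevelSets μ g) :
    ∃ h : C(X, I), MeasurePreserving h μ volume ∧ ∀ x y, h x ≤ h y ↔ g x ≤ g y := by
  have := Measure.isProbabilityMeasure_map (μ := μ) g.measurable.aemeasurable
  have := nullSingletonClass_map g.measurable hg
  refine ⟨⟨unitCdf (μ.map g) ∘ g, (continuous_cdf.subtype_mk _).comp g.continuous⟩,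
    measurePreserving_unitCdf.comp (g.measurable.measurePreserving μ), fun x y ↦ ⟨?_, ?_⟩⟩
  · contrapose!
    exact fun h ↦ cdf_lt_cdf (map_Ioc_ne_zero g h)
  · exact fun h ↦ ProbabilityTheory.monotone_cdf (μ.map g) h

theorem le_of_measurePreserving_of_le {X : Type*} [MeasurableSpace X] {μ : Measure X}
    {f h : X → I} (hf : MeasurePreserving f μ volume) (hh : MeasurePreserving h μ volume)
    {a b : ℝ} (ha : a ≤ 1) (hb : 0 ≤ b) (hfh : ∀ z, (f z : ℝ) ≤ a → (h z : ℝ) ≤ b) : a ≤ b := by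
  by_contra! hba
  let a' : I := ⟨a, hb.trans hba.le, ha⟩
  let b' : I := ⟨b, hb, hba.le.trans ha⟩
  have volume_Iic_le : volume (Iic a') ≤ volume (Iic b') := by
    rw [← hf.measure_preimage measurableSet_Iic.nullMeasurableSet,
      ← hh.measure_preimage measurableSet_Iic.nullMeasurableSet]
    exact measure_mono fun z hz ↦ hfh z hz
  rw [unitInterval.volume_Iic, unitInterval.volume_Iic, ENNReal.ofReal_le_ofReal_iff hb]
    at volume_Iic_le
  exact hba.not_ge volume_Iic_le

theorem dist_le_two_mul_of_orderEquivalent {X : Type*} [MeasurableSpace X] {μ : Measure X}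
    {f h : X → I} {g : X → ℝ} {η : ℝ} (hf : MeasurePreserving f μ volume)
    (hh : MeasurePreserving h μ volume) (hord : ∀ x y, h x ≤ h y ↔ g x ≤ g y)
    (hfg : ∀ x, |g x - f x| ≤ η) (x : X) : dist (h x) (f x) ≤ 2 * η := by
  have hη : 0 ≤ η := (abs_nonneg _).trans (hfg x)
  have upper (z : X) : g z ≤ f z + η := by linarith [(abs_le.1 (hfg z)).2]
  have lower (z : X) : f z - η ≤ g z := by linarith [(abs_le.1 (hfg z)).1]
  have h_le : (h x : ℝ) ≤ f x + 2 * η :=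
    le_of_measurePreserving_of_le hh hf (h x).2.2 (by linarith [(f x).2.1]) fun z hz ↦ by
      linarith [(hord z x).1 hz, lower z, upper x]
  have le_h : (f x : ℝ) - 2 * η ≤ h x :=
    le_of_measurePreserving_of_le hf hh (by linarith [(f x).2.2]) (h x).2.1 fun z hz ↦
      (hord z x).2 (by linarith [upper z, lower x])
  rw [Subtype.dist_eq, Real.dist_eq, abs_le]
  constructor <;> linarith

/-! ### Transfer of generic conditions to `C_λ` -/

theorem isClosed_setOf_measurePreserving {X Y : Type*} [TopologicalSpace X] [CompactSpace X]
    [MeasurableSpace X] [OpensMeasurableSpace X] [MetricSpace Y]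
    [MeasurableSpace Y] [BorelSpace Y] (μ : Measure X) [IsFiniteMeasure μ] (ν : Measure Y)
    [IsFiniteMeasure ν] : IsClosed {f : C(X, Y) | MeasurePreserving f μ ν} := by
  have preserving_iff (f : C(X, Y)) : MeasurePreserving f μ ν ↔
      ∀ φ : BoundedContinuousFunction Y ℝ, ∫ x, φ (f x) ∂μ = ∫ y, φ y ∂ν := by
    have map_integral (φ : BoundedContinuousFunction Y ℝ) :
        ∫ y, φ y ∂μ.map f = ∫ x, φ (f x) ∂μ :=
      integral_map f.measurable.aemeasurable φ.continuous.aestronglyMeasurable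
    refine ⟨fun hf φ ↦ ?_, fun hf ↦ ⟨f.measurable, ?_⟩⟩
    · rw [← map_integral, hf.map_eq]
    · exact ext_of_forall_integral_eq_of_IsFiniteMeasure fun φ ↦ (map_integral φ).trans (hf φ)
  simp only [preserving_iff, ofPred_forall]
  refine isClosed_iInter fun φ ↦ isClosed_eq ?_ continuous_const
  refine continuous_of_dominated (bound := fun _ ↦ ‖φ‖) (fun f ↦ ?_)
    (fun f ↦ .of_forall fun x ↦ φ.norm_coe_le_norm (f x)) (integrable_const _)
    (.of_forall fun x ↦ by fun_prop)
  exact (φ.continuous.comp f.continuous).aestronglyMeasurable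

instance completeSpace_CLam : CompleteSpace CLam :=
  (isClosed_setOf_measurePreserving volume volume).completeSpace_coe

/-- An element of `C_λ` as a real-valued function, so that order-theoretic conditions on `C(I, ℝ)`
can be imposed on it. -/
def CLam.toReal (f : CLam) : C(I, ℝ) :=
  inclusionMap.comp f.1

theorem CLam.continuous_toReal : Continuous CLam.toReal :=
  (ContinuousMap.continuous_postcomp inclusionMap).comp continuous_subtype_val

/-- Membership in `U` depends only on how a function orders the points of `X`; such conditions can
be imposed on elements of `C_λ` by rearranging values. -/
def IsOrderInvariant {X β : Type*} [TopologicalSpace X] [TopologicalSpace β] [LE β]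
    (U : Set C(X, β)) : Prop :=
  ∀ ⦃g h : C(X, β)⦄, (∀ x y, h x ≤ h y ↔ g x ≤ g y) → g ∈ U → h ∈ U

theorem CLam.dense_preimage_toReal {U : Set C(I, ℝ)} (hU : IsOpen U) (hUd : Dense U)
    (hUo : IsOrderInvariant U) : Dense (CLam.toReal ⁻¹' U) := by
  refine Metric.dense_iff.2 fun f ε hε ↦ ?_
  obtain ⟨g, hgf, hgU, hg⟩ := Metric.dense_iff.1
    (hUd.inter_of_isOpen_left dense_setOf_hasNullLevelSets hU) f.toReal (ε / 3) (by positivity)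
  obtain ⟨h, hh, hord⟩ := exists_measurePreserving_orderEquivalent hg
  have g_close (x : I) : |g x - f.1 x| ≤ ε / 3 :=
    (ContinuousMap.dist_apply_le_dist x).trans (Metric.mem_ball.1 hgf).le
  have h_close : dist h f.1 ≤ 2 * (ε / 3) := (ContinuousMap.dist_le (by positivity)).2
    (dist_le_two_mul_of_orderEquivalent f.2 hh hord g_close)
  exact ⟨⟨h, hh⟩, h_close.trans_lt (by linarith), hUo hord hgU⟩

theorem CLam.eventually_residual_toReal_mem {U : Set C(I, ℝ)} (hU : IsOpen U) (hUd : Dense U)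
    (hUo : IsOrderInvariant U) : ∀ᶠ f : CLam in residual CLam, f.toReal ∈ U :=
  residual_of_dense_open (hU.preimage CLam.continuous_toReal)
    (CLam.dense_preimage_toReal hU hUd hUo)

/-- The properties that force a continuous function to have normal level sets and that hold for
generic elements of `C_λ`: no points of increase or decrease at any scale, and distinct values at
distinct local extrema. -/
structure IsTypical {X : Type*} [TopologicalSpace X] [LT X] (f : X → ℝ) : Prop where
  not_isIncreasePointOn : ∀ x, ∀ s ∈ 𝓝 x, ¬IsIncreasePointOn f s x
  not_isDecreasePointOn : ∀ x, ∀ s ∈ 𝓝 x, ¬IsIncreasePointOn (-f) s x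
  injOn_localExtr : InjOn f {x | IsLocalExtr f x}

theorem IsOrderInvariant.preimage_neg {X β : Type*} [TopologicalSpace X] [TopologicalSpace β]
    [AddGroup β] [ContinuousNeg β] [LE β] [AddLeftMono β] [AddRightMono β] {U : Set C(X, β)}
    (hU : IsOrderInvariant U) : IsOrderInvariant (Neg.neg ⁻¹' U) :=
  fun _ _ hgh ↦ hU fun x y ↦ by simpa using hgh y x

theorem isOrderInvariant_setOf_forall_not_isIncreasePointOn_ball {X β : Type*}
    [PseudoMetricSpace X] [LT X] [TopologicalSpace β] [LE β] (δ : ℝ) :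
    IsOrderInvariant {f : C(X, β) | ∀ x, ¬IsIncreasePointOn f (Metric.ball x δ) x} :=
  fun _ _ hgh hg x hx ↦ hg x fun y hy ↦
    ⟨fun h ↦ (hgh y x).1 ((hx y hy).1 h), fun h ↦ (hgh x y).1 ((hx y hy).2 h)⟩

theorem isOrderInvariant_setOf_hasDistinctExtrema {X β : Type*} [TopologicalSpace X]
    [TopologicalSpace β] [PartialOrder β] (s t : Set X) :
    IsOrderInvariant {f : C(X, β) | HasDistinctExtrema f s t} := by
  intro g h hgh hg x hx y hy hxs hyt hxy
  have isExtrOn_iff (s : Set X) (x : X) : IsExtrOn h s x ↔ IsExtrOn g s x := by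
    simp only [IsExtrOn, IsExtrFilter, IsMinFilter, IsMaxFilter, hgh]
  exact hg x hx y hy ((isExtrOn_iff s x).1 hxs) ((isExtrOn_iff t y).1 hyt)
    (((hgh x y).1 hxy.le).antisymm ((hgh y x).1 hxy.ge))

theorem not_isIncreasePointOn_of_forall_ball {X β : Type*} [PseudoMetricSpace X] [LT X] [LE β]
    {f : X → β} (h : ∀ n : ℕ, ∀ x, ¬IsIncreasePointOn f (Metric.ball x (1 / (n + 1))) x) (x : X)
    (s : Set X) (hs : s ∈ 𝓝 x) : ¬IsIncreasePointOn f s x := by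
  obtain ⟨n, -, hn⟩ := Metric.nhds_basis_ball_inv_nat_succ.mem_iff.1 hs
  exact fun hx ↦ h n x (hx.mono hn)

theorem exists_rat_isExtrOn_of_isLocalExtr {β : Type*} [Preorder β] {D : Set ℝ} {f : D → β}
    {x : D} {V : Set ℝ} (hV : V ∈ 𝓝 (x : ℝ)) (h : IsLocalExtr f x) :
    ∃ p q : ℚ, (x : ℝ) ∈ Icc (p : ℝ) q ∧ Icc (p : ℝ) q ⊆ V ∧
      IsExtrOn f ((↑) ⁻¹' Icc (p : ℝ) q) x := by
  obtain ⟨N, hN, hNx⟩ : ∃ N ∈ 𝓝 x, IsExtrOn f N x :=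
    h.elim (fun h ↦ ⟨_, h, .inl fun _ hy ↦ hy⟩) fun h ↦ ⟨_, h, .inr fun _ hy ↦ hy⟩
  obtain ⟨W, hW, hWN⟩ := mem_nhds_subtype D x N |>.1 hN
  obtain ⟨p, q, hx, hpq⟩ := exists_rat_mem_Icc_subset (inter_mem hV hW)
  exact ⟨p, q, hx, hpq.trans inter_subset_left,
    hNx.on_subset fun y hy ↦ hWN (hpq hy).2⟩

theorem injOn_localExtr_of_hasDistinctExtrema {β : Type*} [Preorder β] {D : Set ℝ} {f : D → β}
    (h : ∀ p q r w : ℚ, q < r →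
      HasDistinctExtrema f ((↑) ⁻¹' Icc (p : ℝ) q) ((↑) ⁻¹' Icc (r : ℝ) w)) :
    InjOn f {x | IsLocalExtr f x} := by
  suffices ∀ x y : D, IsLocalExtr f x → IsLocalExtr f y → x < y → f x ≠ f y from
    fun x hx y hy hxy ↦ by_contra fun hne ↦ (lt_or_gt_of_ne hne).elim
      (fun hlt ↦ this x y hx hy hlt hxy) fun hlt ↦ this y x hy hx hlt hxy.symm
  intro x y hx hy hxy
  obtain ⟨m, hxm, hmy⟩ := exists_between (Subtype.coe_lt_coe.2 hxy)
  obtain ⟨p, q, hxpq, hpq, hfx⟩ := exists_rat_isExtrOn_of_isLocalExtr (Iio_mem_nhds hxm) hx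
  obtain ⟨r, w, hyrw, hrw, hfy⟩ := exists_rat_isExtrOn_of_isLocalExtr (Ioi_mem_nhds hmy) hy
  have hqm : (q : ℝ) < m := hpq ⟨hxpq.1.trans hxpq.2, le_rfl⟩
  have hmr : m < (r : ℝ) := hrw ⟨le_rfl, hyrw.1.trans hyrw.2⟩
  exact h p q r w (Rat.cast_lt.1 (hqm.trans hmr)) x hxpq y hyrw hfx hfy

theorem eventually_residual_isTypical : ∀ᶠ f : CLam in residual CLam, IsTypical f.toReal := by
  have no_increase (n : ℕ) := CLam.eventually_residual_toReal_mem
    (isOpen_setOf_forall_not_isIncreasePointOn_ball (1 / (n + 1)))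
    (dense_setOf_forall_not_isIncreasePointOn_ball (by positivity))
    (isOrderInvariant_setOf_forall_not_isIncreasePointOn_ball _)
  have no_decrease (n : ℕ) := CLam.eventually_residual_toReal_mem
    ((isOpen_setOf_forall_not_isIncreasePointOn_ball (1 / (n + 1))).preimage continuous_neg)
    ((dense_setOf_forall_not_isIncreasePointOn_ball (by positivity)).preimage
      (Homeomorph.neg C(I, ℝ)).isOpenMap)
    (isOrderInvariant_setOf_forall_not_isIncreasePointOn_ball _).preimage_neg
  have distinct_extrema (p q r w : ℚ) (hqr : q < r) := CLam.eventually_residual_toReal_mem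
    (isOpen_setOf_hasDistinctExtrema (isClosed_Icc.preimage continuous_subtype_val)
      (isClosed_Icc.preimage continuous_subtype_val))
    (dense_setOf_hasDistinctExtrema (p := p) (w := w) (Rat.cast_lt.2 hqr))
    (isOrderInvariant_setOf_hasDistinctExtrema _ _)
  simp only [← eventually_countable_forall] at no_increase no_decrease distinct_extrema
  filter_upwards [no_increase, no_decrease, distinct_extrema] with f hinc hdec hext
  exact ⟨not_isIncreasePointOn_of_forall_ball hinc, not_isIncreasePointOn_of_forall_ball hdec,
    injOn_localExtr_of_hasDistinctExtrema hext⟩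

/-! ### Level sets of typical functions -/

theorem forall_lt_or_forall_gt_of_forall_ne {X β : Type*} [TopologicalSpace X] [LinearOrder β]
    [TopologicalSpace β] [OrderClosedTopology β] {f : X → β} {s : Set X} {c : β}
    (hs : IsPreconnected s) (hf : ContinuousOn f s) (hne : ∀ y ∈ s, f y ≠ c) :
    (∀ y ∈ s, f y < c) ∨ ∀ y ∈ s, c < f y := by
  by_contra! h
  obtain ⟨⟨y, hy, hyc⟩, z, hz, hzc⟩ := h
  obtain ⟨w, hw, hwc⟩ := hs.intermediate_value hz hy hf ⟨hzc, hyc⟩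
  exact hne w hw hwc

theorem IsTypical.subsingleton_level_inter_localExtr {X : Type*} [TopologicalSpace X] [LT X]
    {f : X → ℝ} (hf : IsTypical f) (c : ℝ) :
    (f ⁻¹' {c} ∩ {x | IsLocalExtr f x}).Subsingleton :=
  fun _ hx _ hy ↦ hf.injOn_localExtr hx.2 hy.2 (hx.1.trans hy.1.symm)

theorem IsTypical.level_eq_singleton_of_isExtrOn_univ {X : Type*} [TopologicalSpace X] [LT X]
    {f : X → ℝ} {x : X} (hf : IsTypical f) (hx : IsExtrOn f univ x) :
    f ⁻¹' {f x} = {x} := by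
  refine eq_singleton_iff_unique_mem.2 ⟨rfl, fun y (hy : f y = f x) ↦ ?_⟩
  have hy' : IsExtrOn f univ y := by
    simpa only [IsExtrOn, IsExtrFilter, IsMinFilter, IsMaxFilter, hy] using hx
  exact hf.injOn_localExtr (hy'.isLocalExtr univ_mem) (hx.isLocalExtr univ_mem) hy

section Typical

variable {X : Type*} [ConditionallyCompleteLinearOrder X] [TopologicalSpace X] [OrderTopology X]
  [DenselyOrdered X] {f : X → ℝ} {s : Set X} {x : X} {c : ℝ}

theorem isExtrOn_of_forall_ne (hs : s.OrdConnected) (hf : ContinuousOn f s)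
    (hne : ∀ y ∈ s, y ≠ x → f y ≠ f x) (hinc : ¬IsIncreasePointOn f s x)
    (hdec : ¬IsIncreasePointOn (-f) s x) : IsExtrOn f s x := by
  have left_side : (∀ y ∈ s ∩ Iio x, f y < f x) ∨ ∀ y ∈ s ∩ Iio x, f x < f y :=
    forall_lt_or_forall_gt_of_forall_ne (hs.inter ordConnected_Iio).isPreconnected
      (hf.mono inter_subset_left) fun y hy ↦ hne y hy.1 (ne_of_lt hy.2)
  have right_side : (∀ y ∈ s ∩ Ioi x, f y < f x) ∨ ∀ y ∈ s ∩ Ioi x, f x < f y :=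
    forall_lt_or_forall_gt_of_forall_ne (hs.inter ordConnected_Ioi).isPreconnected
      (hf.mono inter_subset_left) fun y hy ↦ hne y hy.1 (ne_of_gt hy.2)
  rcases left_side with hl | hl <;> rcases right_side with hr | hr
  · refine .inr fun y hy ↦ show f y ≤ f x from ?_
    rcases lt_trichotomy y x with h | rfl | h
    exacts [(hl y ⟨hy, h⟩).le, le_rfl, (hr y ⟨hy, h⟩).le]
  · exact (hinc fun y hy ↦ ⟨fun h ↦ (hl y ⟨hy, h⟩).le, fun h ↦ (hr y ⟨hy, h⟩).le⟩).elim
  · exact (hdec fun y hy ↦ ⟨fun h ↦ neg_le_neg (hl y ⟨hy, h⟩).le,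
      fun h ↦ neg_le_neg (hr y ⟨hy, h⟩).le⟩).elim
  · refine .inl fun y hy ↦ show f x ≤ f y from ?_
    rcases lt_trichotomy y x with h | rfl | h
    exacts [(hl y ⟨hy, h⟩).le, le_rfl, (hr y ⟨hy, h⟩).le]

namespace IsTypical

theorem isExtrOn_of_forall_ne (hf : IsTypical f) (hfc : Continuous f) (hs : s.OrdConnected)
    (hx : s ∈ 𝓝 x) (hne : ∀ y ∈ s, y ≠ x → f y ≠ f x) : IsExtrOn f s x :=
  _root_.isExtrOn_of_forall_ne hs hfc.continuousOn hne (hf.not_isIncreasePointOn x s hx)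
    (hf.not_isDecreasePointOn x s hx)

theorem isLocalExtr_iff_eventually_ne (hf : IsTypical f) (hfc : Continuous f) :
    IsLocalExtr f x ↔ ∀ᶠ y in 𝓝[≠] x, f y ≠ f x := by
  rw [eventually_nhdsWithin_iff]
  constructor
  · intro hx
    have : ∀ᶠ y in 𝓝 x, f y = f x → IsLocalExtr f y := by
      rcases hx with hx | hx
      all_goals
        filter_upwards [eventually_eventually_nhds.2 hx] with y hy hyx
      · exact .inl (hy.mono fun z hz ↦ hyx.trans_le hz)
      · exact .inr (hy.mono fun z hz ↦ hz.trans_eq hyx.symm)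
    exact this.mono fun y hy hyx hfy ↦ hyx (hf.injOn_localExtr (hy hfy) hx hfy)
  · intro hx
    obtain ⟨a, b, -, hab, habx⟩ := exists_Icc_mem_subset_of_mem_nhds hx
    exact (hf.isExtrOn_of_forall_ne hfc ordConnected_Icc hab fun y hy ↦ habx hy).isLocalExtr hab

theorem perfect_level_diff_localExtr (hf : IsTypical f) (hfc : Continuous f) (c : ℝ) :
    Perfect (f ⁻¹' {c} \ {x | IsLocalExtr f x}) := by
  refine ⟨isClosed_iff_frequently.2 fun x hx ↦ ?_, fun x hx ↦ ?_⟩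
  · have hxc : f x = c :=
      isClosed_iff_frequently.1 (isClosed_singleton.preimage hfc) x (hx.mono fun y hy ↦ hy.1)
    refine ⟨hxc, fun hext ↦ hx ?_⟩
    filter_upwards [eventually_nhdsWithin_iff.1
      ((hf.isLocalExtr_iff_eventually_ne hfc).1 hext)] with y hyx hy
    by_cases h : y = x
    · exact hy.2 (h ▸ hext)
    · exact hyx h (hy.1.trans hxc.symm)
  · have hxc : f x = c := hx.1
    have level_accumulates : ∃ᶠ y in 𝓝[≠] x, f y = c := by
      simpa [hf.isLocalExtr_iff_eventually_ne hfc, hxc] using hx.2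
    have extr_away : ∀ᶠ y in 𝓝[≠] x, y ∉ f ⁻¹' {c} ∩ {x | IsLocalExtr f x} :=
      nhdsWithin_le_nhds <|
        (hf.subsingleton_level_inter_localExtr c).finite.isClosed.isOpen_compl.mem_nhds
          fun h ↦ hx.2 h.2
    exact accPt_iff_frequently_nhdsNE.2 <| (level_accumulates.and_eventually extr_away).mono
      fun y hy ↦ ⟨hy.1, fun h ↦ hy.2 ⟨hy.1, h⟩⟩

theorem level_diff_localExtr_nonempty (hf : IsTypical f) (hfc : Continuous f) {a b : X}
    (ha : f a < c) (hb : c < f b) : (f ⁻¹' {c} \ {x | IsLocalExtr f x}).Nonempty := by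
  obtain ⟨x, rfl⟩ := mem_range_of_exists_le_of_exists_ge hfc ⟨a, ha.le⟩ ⟨b, hb.le⟩
  by_contra! hempty
  have hlevel : f ⁻¹' {f x} ⊆ {x | IsLocalExtr f x} := sdiff_eq_empty.1 hempty
  have hne (y : X) (hyx : y ≠ x) : f y ≠ f x := fun h ↦
    hyx (hf.injOn_localExtr (hlevel h) (hlevel rfl) h)
  rcases hf.isExtrOn_of_forall_ne hfc ordConnected_univ univ_mem fun y _ ↦ hne y with h | h
  · exact ha.not_ge (h (mem_univ a))
  · exact hb.not_ge (h (mem_univ b))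

theorem exists_isOpen_inter_level_eq_singleton (hf : IsTypical f) (hfc : Continuous f)
    (hx : IsLocalExtr f x) : ∃ U, IsOpen U ∧ U ∩ f ⁻¹' {f x} = {x} := by
  obtain ⟨U, hU, hUo, hxU⟩ := eventually_nhds_iff.1 <|
    eventually_nhdsWithin_iff.1 ((hf.isLocalExtr_iff_eventually_ne hfc).1 hx)
  exact ⟨U, hUo, eq_singleton_iff_unique_mem.2
    ⟨⟨hxU, rfl⟩, fun y hy ↦ by_contra fun hyx ↦ hU y hy.1 hyx hy.2⟩⟩

end IsTypical

end Typical

theorem exists_isMinOn_minVal_eq (f : C(I, I)) :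
    ∃ x, IsMinOn (fun y ↦ (f y : ℝ)) univ x ∧ minVal f = f x := by
  obtain ⟨x, -, hx⟩ := isCompact_univ.exists_isMinOn univ_nonempty
    (f := fun y ↦ (f y : ℝ)) (by fun_prop)
  have : IsLeast (range fun y ↦ (f y : ℝ)) (f x) :=
    ⟨mem_range_self x, forall_mem_range.2 fun y ↦ hx (mem_univ y)⟩
  exact ⟨x, hx, this.csInf_eq⟩

theorem exists_isMaxOn_maxVal_eq (f : C(I, I)) :
    ∃ x, IsMaxOn (fun y ↦ (f y : ℝ)) univ x ∧ maxVal f = f x := by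
  obtain ⟨x, -, hx⟩ := isCompact_univ.exists_isMaxOn univ_nonempty
    (f := fun y ↦ (f y : ℝ)) (by fun_prop)
  have : IsGreatest (range fun y ↦ (f y : ℝ)) (f x) :=
    ⟨mem_range_self x, forall_mem_range.2 fun y ↦ hx (mem_univ y)⟩
  exact ⟨x, hx, this.csSup_eq⟩

theorem IsTypical.hasNormalLevelSets {f : C(I, I)} (hf : IsTypical fun x ↦ (f x : ℝ)) :
    HasNormalLevelSets f := by
  let g : I → ℝ := fun x ↦ f x
  have hg : IsTypical g := hf
  have hgc : Continuous g := by fun_prop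
  obtain ⟨a, hmin, ha⟩ := exists_isMinOn_minVal_eq f
  obtain ⟨b, hmax, hb⟩ := exists_isMaxOn_maxVal_eq f
  rw [HasNormalLevelSets, ha, hb]
  have nonempty {c : ℝ} (hc : c ∈ Ioo (g a) (g b)) :
      (g ⁻¹' {c} \ {x | IsLocalExtr g x}).Nonempty :=
    hg.level_diff_localExtr_nonempty hgc hc.1 hc.2
  refine ⟨g '' {x | IsLocalExtr g x} ∩ Ioo (g a) (g b),
    (countable_image_setOf_isLocalExtr g).mono inter_subset_left, inter_subset_right, ?_, ?_, ?_⟩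
  · intro c hc hcE
    have : g ⁻¹' {c} \ {x | IsLocalExtr g x} = Lev f c :=
      sdiff_eq_left.2 <| disjoint_left.2 fun x hx hext ↦ hcE ⟨⟨x, hext, hx⟩, hc⟩
    exact this ▸ ⟨hg.perfect_level_diff_localExtr hgc c, nonempty hc⟩
  · rintro c (rfl | rfl)
    · exact ⟨a, hg.level_eq_singleton_of_isExtrOn_univ (.inl hmin)⟩
    · exact ⟨b, hg.level_eq_singleton_of_isExtrOn_univ (.inr hmax)⟩
  · rintro _ ⟨⟨x, hx, rfl⟩, hc⟩
    have level_inter_extr : g ⁻¹' {g x} ∩ {x | IsLocalExtr g x} = {x} :=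
      (hg.subsingleton_level_inter_localExtr (g x)).eq_singleton_of_mem ⟨rfl, hx⟩
    refine ⟨_, x, hg.perfect_level_diff_localExtr hgc (g x), nonempty hc, fun h ↦ h.2 hx, ?_,
      hg.exists_isOpen_inter_level_eq_singleton hgc hx⟩
    rw [← level_inter_extr, sdiff_union_inter]
    rfl

/-- There is a dense `G_δ` subset of `C_λ` (uniform topology) every member of which has
normal level sets. -/
theorem stmt12 :
    ∃ S : Set CLam, IsGδ S ∧ Dense S ∧ ∀ f ∈ S, HasNormalLevelSets f.1 :=
  eventually_residual.1 (eventually_residual_isTypical.mono fun _ hf ↦ hf.hasNormalLevelSets)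

end
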